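/- Let D be a regular domain. For every alternative a_s ∈ A ∖ {a_1, a_m} there exists a vertex-path of Π(a_1, a_m) that contains a_s. -/

import Mathlib

open Finset

noncomputable section

/-- A preference is a linear order over the `m` alternatives, represented as a bijection
from rank positions (0-based: position `0` is the top) to alternatives. -/
abbrev Pref (m : ℕ) := Fin m ≃ Fin m

namespace PFBRPaper

variable {m n : ℕ}

/-- `a` is strictly preferred to `b` under `P`. -/
def Prefers (P : Pref m) (a b : Fin m) : Prop := P.symm a < P.symm b

/-- The last alternative `a_m` (0-based index `m-1`). -/
def lastAlt (m : ℕ) [NeZero m] : Fin m :=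
  ⟨m - 1, Nat.sub_lt (Nat.pos_of_ne_zero (NeZero.ne m)) Nat.one_pos⟩

/-- Every alternative is top-ranked by some preference in the domain. -/
def MinimallyRich [NeZero m] (D : Set (Pref m)) : Prop :=
  ∀ a : Fin m, ∃ P ∈ D, P 0 = a

/-- The preference ranking `a_m` first, ..., `a_1` last. -/
def revPref (m : ℕ) : Pref m :=
  ⟨Fin.rev, Fin.rev, fun i => Fin.rev_rev i, fun i => Fin.rev_rev i⟩

/-- Diversity, with the labeling convention: the domain contains the preference ranking
`a_1` first, `a_2` second, ..., `a_m` last (the identity), together with its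
complete reversal. -/
def Diversity (D : Set (Pref m)) : Prop :=
  Equiv.refl (Fin m) ∈ D ∧ revPref m ∈ D

/-- Two preferences are adjacent: the alternatives at two contiguous rank positions are
swapped and everything else is unchanged. -/
def Adjacent (P P' : Pref m) : Prop :=
  P ≠ P' ∧ ∃ k : ℕ, ∃ hk : k + 1 < m,
    P ⟨k, Nat.lt_of_succ_lt hk⟩ = P' ⟨k + 1, hk⟩ ∧
    P ⟨k + 1, hk⟩ = P' ⟨k, Nat.lt_of_succ_lt hk⟩ ∧
    ∀ l : Fin m, (l : ℕ) ≠ k → (l : ℕ) ≠ k + 1 → P l = P' l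

/-- `π 0, …, π (v-1)` is a path in `D` connecting `P` and `P'`. -/
def IsPath (D : Set (Pref m)) (P P' : Pref m) (π : ℕ → Pref m) (v : ℕ) : Prop :=
  1 ≤ v ∧ (∀ i < v, π i ∈ D) ∧
  (∀ i < v, ∀ j < v, π i = π j → i = j) ∧
  π 0 = P ∧ π (v - 1) = P' ∧
  ∀ i, i + 1 < v → Adjacent (π i) (π (i + 1))

/-- The path `π 0, …, π (v-1)` has no `{a,b}`-restoration: the relative ranking of
`a` and `b` switches at most once along the path. -/
def NoRestoration (π : ℕ → Pref m) (v : ℕ) (a b : Fin m) : Prop :=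
  ∀ i j k : ℕ, i < j → j < k → k < v →
    ¬(Prefers (π i) a b ∧ Prefers (π j) b a ∧ Prefers (π k) a b) ∧
    ¬(Prefers (π i) b a ∧ Prefers (π j) a b ∧ Prefers (π k) b a)

def NoRestorationDomain (D : Set (Pref m)) : Prop :=
  ∀ P ∈ D, ∀ P' ∈ D, P ≠ P' → ∀ a b : Fin m,
    ∃ π v, IsPath D P P' π v ∧ NoRestoration π v a b

def RegularDomain [NeZero m] (D : Set (Pref m)) : Prop :=
  MinimallyRich D ∧ Diversity D ∧ NoRestorationDomain D

/-- `a ≈ b`: the two alternatives are strongly connected in the domain `D`. -/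
def StronglyConnected [NeZero m] (D : Set (Pref m)) (a b : Fin m) : Prop :=
  a ≠ b ∧ ∃ P ∈ D, ∃ P' ∈ D,
    P 0 = a ∧ P 1 = b ∧ P' 0 = b ∧ P' 1 = a ∧
    ∀ k : Fin m, 2 ≤ (k : ℕ) → P k = P' k

/-- `l` is a vertex-path of the graph `G_≈^B(D)`. -/
def IsVertexPathOn [NeZero m] (D : Set (Pref m)) (B : Set (Fin m)) (l : List (Fin m)) : Prop :=
  l ≠ [] ∧ l.Nodup ∧ (∀ x ∈ l, x ∈ B) ∧ l.Chain' (StronglyConnected D)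

/-- `l` is a vertex-path of `G_≈^B(D)` connecting `a` and `b`. -/
def VertexPathBetween [NeZero m] (D : Set (Pref m)) (B : Set (Fin m)) (a b : Fin m)
    (l : List (Fin m)) : Prop :=
  IsVertexPathOn D B l ∧ l.head? = some a ∧ l.getLast? = some b

/-- `a` is a leaf of the subgraph `G_≈^B(D)`. -/
def IsLeaf [NeZero m] (D : Set (Pref m)) (B : Set (Fin m)) (a : Fin m) : Prop :=
  a ∈ B ∧ ∃! b : Fin m, b ∈ B ∧ StronglyConnected D a b

/-- Single-peakedness w.r.t. the natural order. -/
def SinglePeaked [NeZero m] (P : Pref m) : Prop :=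
  ∀ a b : Fin m, ((a < b ∧ b < P 0) ∨ (P 0 < b ∧ b < a)) → Prefers P b a

/-- A `(p,q)`-hybrid preference (thresholds `p < q`, 0-based). -/
def IsHybridPref [NeZero m] (p q : Fin m) (P : Pref m) : Prop :=
  (∀ r s : Fin m, ((r ≤ p ∧ s ≤ p) ∨ (q ≤ r ∧ q ≤ s)) →
      ((r < s ∧ s < P 0) ∨ (P 0 < s ∧ s < r)) → Prefers P s r) ∧
  (P 0 ≤ p → ∀ l : Fin m, p ≤ l → l ≤ q → l ≠ p → Prefers P p l) ∧
  (q ≤ P 0 → ∀ l : Fin m, p ≤ l → l ≤ q → l ≠ q → Prefers P q l)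

/-- The `(p,q)`-hybrid domain of all `(p,q)`-hybrid preferences. -/
def hybridDomain [NeZero m] (p q : Fin m) : Set (Pref m) := {P | IsHybridPref p q P}

/-- `D` is a `(p,q)`-hybrid* domain. -/
def IsHybridStar [NeZero m] (D : Set (Pref m)) (p q : Fin m) : Prop :=
  D ⊆ hybridDomain p q ∧
  (∀ k : Fin m, k ≠ 0 → k ≠ lastAlt m →
      ∃ l, VertexPathBetween D Set.univ 0 (lastAlt m) l ∧ k ∈ l) ∧
  ((p : ℕ) + 1 < (q : ℕ) → ∀ a : Fin m, ¬ IsLeaf D (Set.Icc p q) a)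

/-- A lottery over the alternatives. -/
def Lottery (m : ℕ) : Type :=
  {f : Fin m → ℝ // (∀ a, 0 ≤ f a) ∧ ∑ a, f a = 1}

/-- The probability that a lottery assigns to a set of alternatives. -/
def Lottery.prob (lam : Lottery m) (B : Finset (Fin m)) : ℝ := ∑ a ∈ B, lam.1 a

/-- The support of a lottery. -/
def Lottery.supp (lam : Lottery m) : Finset (Fin m) :=
  Finset.univ.filter (fun a => 0 < lam.1 a)

/-- The degenerate lottery on `a`. -/
def degLottery (a : Fin m) : Lottery m :=
  ⟨fun b => if b = a then 1 else 0,
   fun b => by by_cases h : b = a <;> simp [h],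
   by simp⟩

/-- A profile of preferences drawn from the domain `D`. -/
abbrev Profile (D : Set (Pref m)) (n : ℕ) := Fin n → D

/-- The top-ranked alternative of a preference in the domain. -/
def topOf [NeZero m] {D : Set (Pref m)} (P : D) : Fin m := P.1 0

def Unanimous [NeZero m] {D : Set (Pref m)} (φ : Profile D n → Lottery m) : Prop :=
  ∀ (P : Profile D n) (a : Fin m), (∀ i, topOf (P i) = a) → φ P = degLottery a

/-- The total probability of the `k` top-ranked alternatives of `P` under `lam`. -/
def topSum (lam : Lottery m) (P : Pref m) (k : ℕ) : ℝ :=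
  ∑ t ∈ Finset.univ.filter (fun t : Fin m => (t : ℕ) < k), lam.1 (P t)

/-- Strategy-proofness: truth-telling first-order stochastically dominates any unilateral
misrepresentation. -/
def StrategyProof {D : Set (Pref m)} (φ : Profile D n → Lottery m) : Prop :=
  ∀ (i : Fin n) (P : Profile D n) (Pi' : D) (k : ℕ), k ≤ m →
    topSum (φ (Function.update P i Pi')) (P i).1 k ≤ topSum (φ P) (P i).1 k

def TopsOnly [NeZero m] {D : Set (Pref m)} (φ : Profile D n → Lottery m) : Prop :=
  ∀ P P' : Profile D n, (∀ i, topOf (P i) = topOf (P' i)) → φ P = φ P'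

def Anonymous {D : Set (Pref m)} (φ : Profile D n → Lottery m) : Prop :=
  ∀ (P : Profile D n) (σ : Equiv.Perm (Fin n)), φ (P ∘ σ) = φ P

/-- The interval `[a_k, a_m]`. -/
def upSet (k : Fin m) : Finset (Fin m) := Finset.univ.filter (fun a => k ≤ a)

/-- The interval `[a_1, a_k]`. -/
def downSet (k : Fin m) : Finset (Fin m) := Finset.univ.filter (fun a => a ≤ k)

/-- The interval `[a_p, a_q]`. -/
def midSet (p q : Fin m) : Finset (Fin m) := Finset.univ.filter (fun a => p ≤ a ∧ a ≤ q)

/-- `S(k,P)`: the voters whose preference top is not to the left of `a_k`. -/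
def voterSet [NeZero m] {D : Set (Pref m)} (P : Profile D n) (k : Fin m) : Finset (Fin n) :=
  Finset.univ.filter (fun i => k ≤ topOf (P i))

/-- `β_{S(k,P)}([a_k, a_m])`, with the convention that it is `0` for `k = m`. -/
def tailProb [NeZero m] {D : Set (Pref m)} (β : Finset (Fin n) → Lottery m)
    (P : Profile D n) (k : ℕ) : ℝ :=
  if h : k < m then (β (voterSet P ⟨k, h⟩)).prob (upSet ⟨k, h⟩) else 0

def BallotUnanimity [NeZero m] (β : Finset (Fin n) → Lottery m) : Prop :=
  β Finset.univ = degLottery (lastAlt m) ∧ β ∅ = degLottery 0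

def BallotMonotone (β : Finset (Fin n) → Lottery m) : Prop :=
  ∀ S T : Finset (Fin n), S ⊂ T →
    ∀ k : Fin m, (β S).prob (upSet k) ≤ (β T).prob (upSet k)

/-- `φ` is a probabilistic fixed ballot rule with probabilistic ballots `β`. -/
def IsPFBRWith [NeZero m] {D : Set (Pref m)} (φ : Profile D n → Lottery m)
    (β : Finset (Fin n) → Lottery m) : Prop :=
  BallotUnanimity β ∧ BallotMonotone β ∧
  ∀ (P : Profile D n) (k : Fin m),
    (φ P).1 k = tailProb β P (k : ℕ) - tailProb β P ((k : ℕ) + 1)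

def IsPFBR [NeZero m] {D : Set (Pref m)} (φ : Profile D n → Lottery m) : Prop :=
  ∃ β, IsPFBRWith φ β

/-- The constrained random-dictatorship condition w.r.t. `a_p` and `a_q`. -/
def ConstrainedRD (p q : Fin m) (β : Finset (Fin n) → Lottery m) : Prop :=
  ∃ ε : Fin n → ℝ, (∀ i, 0 ≤ ε i) ∧ ∑ i, ε i = 1 ∧
    ∀ S : Finset (Fin n),
      (β S).prob (upSet q) = ∑ i ∈ S, ε i ∧
      (β S).prob (downSet p) = ∑ i ∈ Sᶜ, ε i

/-- The constrained random-dictatorship condition w.r.t. `a_p` and `a_q` with every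
conditional dictatorial coefficient equal to `1/n`. -/
def ConstrainedRDUniform (p q : Fin m) (β : Finset (Fin n) → Lottery m) : Prop :=
  ∀ S : Finset (Fin n),
    (β S).prob (upSet q) = (S.card : ℝ) / (n : ℝ) ∧
    (β S).prob (downSet p) = ((Sᶜ : Finset (Fin n)).card : ℝ) / (n : ℝ)

/-- Anonymity at the level of probabilistic ballots. -/
def BallotAnonymous (β : Finset (Fin n) → Lottery m) : Prop :=
  ∀ S S' : Finset (Fin n), S.Nonempty → S'.Nonempty → S.card = S'.card → β S = β S'

/-- Per-capita monotonicity w.r.t. `a_p` and `a_q`. -/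
def PerCapitaMonotone (p q : Fin m) (β : Finset (Fin n) → Lottery m) : Prop :=
  ∀ S S' : Finset (Fin n), S.Nonempty → S ⊂ S' → S' ⊂ Finset.univ →
    (∀ t : Fin m, q ≤ t →
      (β S).prob (upSet t) / (S.card : ℝ) ≤ (β S').prob (upSet t) / (S'.card : ℝ)) ∧
    (∀ s : Fin m, s ≤ p →
      (β Sᶜ).prob (downSet s) / (S.card : ℝ) ≤ (β S'ᶜ).prob (downSet s) / (S'.card : ℝ))

/-- Decomposability: `φ` is a mixture of finitely many unanimous and strategy-proof
deterministic social choice functions. -/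
def Decomposable [NeZero m] {D : Set (Pref m)} (φ : Profile D n → Lottery m) : Prop :=
  ∃ (r : ℕ) (f : Fin r → (Profile D n → Fin m)) (α : Fin r → ℝ),
    (∀ k, 0 < α k) ∧ ∑ k, α k = 1 ∧
    (∀ k, Unanimous (fun P => degLottery (f k P)) ∧
          StrategyProof (fun P => degLottery (f k P))) ∧
    ∀ (P : Profile D n) (a : Fin m),
      (φ P).1 a = ∑ k, α k * (if f k P = a then 1 else 0)

/-- `b̂_S^R`: the `≺`-minimum of `supp(β_S) ∩ R` (with the convention `b̂_N^R = a_m`). -/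
def bR [NeZero m] (β : Finset (Fin n) → Lottery m) (q : Fin m) (S : Finset (Fin n)) : Fin m :=
  if h : ((β S).supp ∩ upSet q).Nonempty then ((β S).supp ∩ upSet q).min' h else lastAlt m

/-- `b̂_S^L`: the `≺`-maximum of `supp(β_S) ∩ L` (with the convention `b̂_∅^L = a_1`). -/
def bL [NeZero m] (β : Finset (Fin n) → Lottery m) (p : Fin m) (S : Finset (Fin n)) : Fin m :=
  if h : ((β S).supp ∩ downSet p).Nonempty then ((β S).supp ∩ downSet p).max' h else 0

/-- `α = min over nonempty S ⊂ N of min(β_S(b̂_S^R)/|S|, β_S(b̂_S^L)/(n-|S|))`. -/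
def alphaVal [NeZero m] (β : Finset (Fin n) → Lottery m) (p q : Fin m) : ℝ :=
  sInf {x : ℝ | ∃ S : Finset (Fin n), S.Nonempty ∧ S ≠ Finset.univ ∧
    x = min ((β S).1 (bR β q S) / (S.card : ℝ))
            ((β S).1 (bL β p S) / ((n : ℝ) - (S.card : ℝ)))}

/-- `γ_S = (|S|/n) e_{b̂_S^R} + ((n-|S|)/n) e_{b̂_S^L}`, pointwise. -/
def gammaFun [NeZero m] (β : Finset (Fin n) → Lottery m) (p q : Fin m)
    (S : Finset (Fin n)) (a : Fin m) : ℝ :=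
  ((S.card : ℝ) / (n : ℝ)) * (if a = bR β q S then 1 else 0)
  + (((n : ℝ) - (S.card : ℝ)) / (n : ℝ)) * (if a = bL β p S then 1 else 0)

/-- The max-min formula `f(P) = max_{S ⊆ N} min({r_1(P_j) : j ∈ S} ∪ {b_S})`. -/
def fbrOutcome [NeZero m] {D : Set (Pref m)} (b : Finset (Fin n) → Fin m)
    (P : Profile D n) : Fin m :=
  Finset.univ.sup' Finset.univ_nonempty
    (fun S : Finset (Fin n) =>
      (insert (b S) (S.image (fun j => topOf (P j)))).inf' (Finset.insert_nonempty _ _) id)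

/-- `f` is a `(p,q)`-fixed ballot rule with deterministic ballots `b` and constrained
dictator `i`. -/
def IsFBRWith [NeZero m] {D : Set (Pref m)} (p q : Fin m) (f : Profile D n → Fin m)
    (b : Finset (Fin n) → Fin m) (i : Fin n) : Prop :=
  b Finset.univ = lastAlt m ∧ b ∅ = 0 ∧
  (∀ S T : Finset (Fin n), S ⊂ T → b S ≤ b T) ∧
  (∀ S : Finset (Fin n), (i ∈ S → q ≤ b S) ∧ (i ∉ S → b S ≤ p)) ∧
  ∀ P : Profile D n, f P = fbrOutcome b P

end PFBRPaper

open PFBRPaper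

/-!
A preference with top `s` can be joined inside the domain to whichever of two completely reversed
preferences ranks `s` above `x`, along a path without `{s, x}`-restoration. All along that path `s`
stays above `x`, so `x` is never a top. Distinct tops of adjacent preferences are strongly
connected, hence the tops trace a walk that avoids `x` from `s` to one of the two terminal
alternatives, in the graph of strongly connected alternatives.

Starting from any path between the terminals, one then absorbs the alternatives one edge at a time:
if the path visits `b` and `s` is a neighbour of `b`, a walk from `s` back to a terminal that avoids
`b`, stopped where it first meets the path, is a detour through `s`.
-/

namespace PFBRPaper

section Graph

variable {V : Type*} {G : SimpleGraph V} {u v w : V}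

open SimpleGraph

theorem isPath_append_iff {p : G.Walk u v} {q : G.Walk v w} :
    (p.append q).IsPath ↔
      p.IsPath ∧ q.IsPath ∧ ∀ x ∈ p.support, x ∈ q.support → x = v := by
  constructor
  · refine fun h ↦ ⟨h.of_append_left, h.of_append_right, fun x hp hq ↦ ?_⟩
    by_contra hx
    exact h.ne_of_mem_support_of_append hx hp hq rfl
  · rintro ⟨hp, hq, hpq⟩
    have hq' := hq.support_nodup
    rw [← q.cons_tail_support, List.nodup_cons] at hq'
    rw [Walk.isPath_def, Walk.support_append, List.nodup_append']
    refine ⟨hp.support_nodup, hq'.2, fun x hxp hxq ↦ hq'.1 ?_⟩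
    exact hpq x hxp (List.mem_of_mem_tail hxq) ▸ hxq

theorem isPath_detour {b c : V} {p₁ : G.Walk u b} {p₂ : G.Walk b c} {p₃ : G.Walk c v}
    (hp : (p₁.append (p₂.append p₃)).IsPath) {r : G.Walk b c} (hr : r.IsPath)
    (hrp : ∀ x ∈ r.support, x ∈ p₁.support ∨ x ∈ p₃.support → x = b ∨ x = c) :
    (p₁.append (r.append p₃)).IsPath := by
  have hb := p₂.start_mem_support
  have hc := p₂.end_mem_support
  simp only [isPath_append_iff, Walk.mem_support_append_iff] at hp ⊢
  grind

theorem exists_isPath_support_subset_of_detour {b c : V} {p : G.Walk u v} (hp : p.IsPath)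
    (hb : b ∈ p.support) (hc : c ∈ p.support) {r : G.Walk b c} (hr : r.IsPath)
    (hrp : ∀ x ∈ r.support, x ∈ p.support → x = b ∨ x = c) :
    ∃ p' : G.Walk u v, p'.IsPath ∧ r.support ⊆ p'.support := by
  obtain ⟨p₁, p₂, rfl⟩ := Walk.mem_support_iff_exists_append.mp hb
  rcases (Walk.mem_support_append_iff _ _).mp hc with hc | hc
  · obtain ⟨p₀, p₁, rfl⟩ := Walk.mem_support_iff_exists_append.mp hc
    rw [← Walk.append_assoc] at hp hrp
    refine ⟨p₀.append (r.reverse.append p₂), isPath_detour hp hr.reverse ?_, ?_⟩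
    · simp only [Walk.mem_support_append_iff, Walk.support_reverse, List.mem_reverse] at hrp ⊢
      grind
    · rw [← List.reverse_subset, ← Walk.support_reverse]
      exact List.Subset.trans (r.reverse.support_subset_support_append_left p₂)
        (p₀.support_subset_support_append_right _)
  · obtain ⟨p₂, p₃, rfl⟩ := Walk.mem_support_iff_exists_append.mp hc
    refine ⟨p₁.append (r.append p₃), isPath_detour hp hr ?_, ?_⟩
    · simp only [Walk.mem_support_append_iff] at hrp ⊢
      grind
    · exact List.Subset.trans (r.support_subset_support_append_left p₃)
        (p₁.support_subset_support_append_right _)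

theorem exists_isPath_mem_support_of_adj {b s t : V} {p : G.Walk u v} (hp : p.IsPath)
    (hb : b ∈ p.support) (hbs : G.Adj b s) (ht : t ∈ p.support) {q : G.Walk s t}
    (hq : b ∉ q.support) : ∃ p' : G.Walk u v, p'.IsPath ∧ s ∈ p'.support := by
  classical
  obtain ⟨c, hcp, hcq, hfirst⟩ :=
    q.exists_mem_support_forall_mem_support_imp_eq p.support.toFinset ⟨t, by simpa using ht⟩
  simp only [List.mem_toFinset] at hcp hfirst
  set q' := (q.takeUntil c hcq).bypass
  have hq' : q'.support ⊆ (q.takeUntil c hcq).support := Walk.support_bypass_subset_support _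
  have hbq' : b ∉ q'.support := fun h ↦ hq (q.support_takeUntil_subset_support hcq (hq' h))
  have hr : (Walk.cons hbs q').IsPath := (Walk.bypass_isPath _).cons hbq'
  obtain ⟨p', hp', hsub⟩ := exists_isPath_support_subset_of_detour hp hb hcp hr (by
    intro x hx hxp
    rw [Walk.support_cons, List.mem_cons] at hx
    exact hx.imp_right fun h ↦ hfirst x hxp (hq' h))
  exact ⟨p', hp', hsub (by simp)⟩

theorem exists_isPath_mem_support (huv : G.Reachable u v)
    (havoid : ∀ s, G.Reachable u s → ∀ x ≠ s,
      ∃ t ∈ ({u, v} : Set V), ∃ q : G.Walk s t, x ∉ q.support)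
    {s : V} (hs : G.Reachable u s) : ∃ p : G.Walk u v, p.IsPath ∧ s ∈ p.support := by
  rw [reachable_iff_reflTransGen] at hs
  induction hs with
  | refl =>
    obtain ⟨p, hp⟩ := huv.exists_isPath
    exact ⟨p, hp, p.start_mem_support⟩
  | @tail b s hub hbs ih =>
    obtain ⟨p, hp, hb⟩ := ih
    have hus := ((reachable_iff_reflTransGen u b).mpr hub).trans hbs.reachable
    obtain ⟨t, ht, q, hq⟩ := havoid s hus b hbs.ne
    have htp : t ∈ p.support := by rcases ht with rfl | rfl <;> simp
    exact exists_isPath_mem_support_of_adj hp hb hbs htp hq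

end Graph

section Preferences

variable {m : ℕ} {D : Set (Pref m)} {P Q : Pref m} {a b : Fin m}

theorem Prefers.ne (h : Prefers P a b) : a ≠ b := by
  rintro rfl
  exact lt_irrefl _ h

theorem not_prefers_iff_of_ne (hab : a ≠ b) : ¬ Prefers P a b ↔ Prefers P b a := by
  rw [Prefers, Prefers, not_lt]
  exact ((P.symm.injective.ne hab).symm).le_iff_lt

theorem prefers_top [NeZero m] (ha : P 0 ≠ a) : Prefers P (P 0) a := by
  rw [Prefers, Equiv.symm_apply_apply, Fin.pos_iff_ne_zero, Ne, Equiv.symm_apply_eq]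
  exact ha.symm

theorem Prefers.ne_top [NeZero m] (h : Prefers P a b) : P 0 ≠ b := by
  rintro rfl
  rw [Prefers, Equiv.symm_apply_apply] at h
  exact Fin.not_lt_zero _ h

theorem NoRestoration.prefers_of_ends {π : ℕ → Pref m} {v : ℕ} (h : NoRestoration π v a b)
    (h₀ : Prefers (π 0) a b) (h₁ : Prefers (π (v - 1)) a b) {i : ℕ} (hi : i < v) :
    Prefers (π i) a b := by
  by_contra hab
  have hba : Prefers (π i) b a := (not_prefers_iff_of_ne h₀.ne).mp hab
  have hi₀ : i ≠ 0 := fun hi₀ ↦ hab (hi₀ ▸ h₀)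
  have hi₁ : i ≠ v - 1 := fun hi₁ ↦ hab (hi₁ ▸ h₁)
  exact (h 0 i (v - 1) (by omega) (by omega) (by omega)).1 ⟨h₀, hba, h₁⟩

theorem NoRestorationDomain.exists_path (hD : NoRestorationDomain D) (hP : P ∈ D) (hQ : Q ∈ D)
    (a b : Fin m) : ∃ π v, IsPath D P Q π v ∧ NoRestoration π v a b := by
  by_cases hPQ : P = Q
  · subst hPQ
    have hpath : IsPath D P P (fun _ ↦ P) 1 :=
      ⟨le_rfl, fun _ _ ↦ hP, by omega, rfl, rfl, by omega⟩
    exact ⟨fun _ ↦ P, 1, hpath, fun i j k ↦ by omega⟩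
  · exact hD P hP Q hQ hPQ a b

end Preferences

section StrongGraph

variable {m : ℕ} [NeZero m] {D : Set (Pref m)} {P Q : Pref m}

theorem StronglyConnected.symm {a b : Fin m} (h : StronglyConnected D a b) :
    StronglyConnected D b a := by
  obtain ⟨hab, P, hP, Q, hQ, hPa, hPb, hQb, hQa, hrest⟩ := h
  exact ⟨hab.symm, Q, hQ, P, hP, hQb, hQa, hPa, hPb, fun k hk ↦ (hrest k hk).symm⟩

/-- The graph `G_≈^A(D)` of strongly connected alternatives, as a `SimpleGraph` so that Mathlib's
walks and paths apply to it. -/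
def strongGraph (D : Set (Pref m)) : SimpleGraph (Fin m) where
  Adj := StronglyConnected D
  symm := ⟨fun _ _ ↦ StronglyConnected.symm⟩
  loopless := ⟨fun _ h ↦ h.1 rfl⟩

theorem vertexPathBetween_support {a b : Fin m} {p : (strongGraph D).Walk a b} (hp : p.IsPath) :
    VertexPathBetween D Set.univ a b p.support := by
  refine ⟨⟨p.support_ne_nil, hp.support_nodup, fun _ _ ↦ Set.mem_univ _,
    p.isChain_adj_support⟩, ?_, ?_⟩
  · rw [List.head?_eq_some_head p.support_ne_nil, p.head_support]
  · rw [List.getLast?_eq_some_getLast p.support_ne_nil, p.getLast_support]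

theorem Adjacent.stronglyConnected_top (h : Adjacent P Q) (hP : P ∈ D) (hQ : Q ∈ D)
    (hne : P 0 ≠ Q 0) : StronglyConnected D (P 0) (Q 0) := by
  obtain ⟨-, k, hk, hPQ, hQP, hrest⟩ := h
  obtain rfl : k = 0 := by
    by_contra hk₀
    exact hne (hrest 0 (by simpa using Ne.symm hk₀) (by simp))
  have h₀ : (⟨0, Nat.lt_of_succ_lt hk⟩ : Fin m) = 0 := rfl
  have h₁ : (⟨0 + 1, hk⟩ : Fin m) = 1 := Fin.ext (Nat.mod_eq_of_lt hk).symm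
  rw [h₀, h₁] at hPQ hQP
  exact ⟨hne, P, hP, Q, hQ, rfl, hQP, rfl, hPQ.symm, fun l hl ↦ hrest l (by omega) (by omega)⟩

theorem IsPath.exists_walk_tops {π : ℕ → Pref m} {v : ℕ} (h : IsPath D P Q π v) :
    ∃ q : (strongGraph D).Walk (P 0) (Q 0), ∀ a ∈ q.support, ∃ i < v, π i 0 = a := by
  obtain ⟨hv, hmem, -, rfl, rfl, hadj⟩ := h
  suffices hwalk : ∀ i < v, ∃ q : (strongGraph D).Walk (π 0 0) (π i 0),
      ∀ a ∈ q.support, ∃ j < v, π j 0 = a from hwalk (v - 1) (by omega)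
  intro i
  induction i with
  | zero => exact fun hi ↦ ⟨.nil, fun a ha ↦ ⟨0, hi, (List.mem_singleton.mp ha).symm⟩⟩
  | succ i ih =>
    intro hi
    obtain ⟨q, hq⟩ := ih (by omega)
    by_cases htop : π i 0 = π (i + 1) 0
    · exact htop ▸ ⟨q, hq⟩
    · have hstep : (strongGraph D).Adj (π i 0) (π (i + 1) 0) :=
        (hadj i hi).stronglyConnected_top (hmem i (by omega)) (hmem (i + 1) hi) htop
      refine ⟨q.concat hstep, fun a ha ↦ ?_⟩
      rw [SimpleGraph.Walk.support_concat, List.mem_append, List.mem_singleton] at ha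
      exact ha.elim (hq a) fun h ↦ ⟨i + 1, hi, h.symm⟩

theorem NoRestorationDomain.reachable_top (hD : NoRestorationDomain D) (hP : P ∈ D)
    (hQ : Q ∈ D) : (strongGraph D).Reachable (P 0) (Q 0) := by
  obtain ⟨π, v, hπ, -⟩ := hD.exists_path hP hQ 0 0
  exact hπ.exists_walk_tops.elim fun q _ ↦ q.reachable

theorem NoRestorationDomain.exists_walk_top_notMem_support (hD : NoRestorationDomain D)
    (hP : P ∈ D) (hQ : Q ∈ D) {x : Fin m} (hx : Prefers Q (P 0) x) :
    ∃ q : (strongGraph D).Walk (P 0) (Q 0), x ∉ q.support := by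
  have hPx : Prefers P (P 0) x := prefers_top hx.ne
  obtain ⟨π, v, hπ, hres⟩ := hD.exists_path hP hQ (P 0) x
  obtain ⟨q, hq⟩ := hπ.exists_walk_tops
  obtain ⟨-, -, -, h₀, h₁, -⟩ := hπ
  refine ⟨q, fun hxq ↦ ?_⟩
  obtain ⟨i, hi, hix⟩ := hq x hxq
  have hstay := hres.prefers_of_ends (by rwa [h₀]) (by rwa [h₁]) hi
  exact hstay.ne_top hix

theorem exists_top_eq_of_reachable (hP : P ∈ D) {a : Fin m}
    (ha : (strongGraph D).Reachable (P 0) a) : ∃ R ∈ D, R 0 = a := by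
  rw [SimpleGraph.reachable_iff_reflTransGen] at ha
  rcases ha.cases_tail with rfl | ⟨-, -, -, -, -, S, hS, -, -, hSa, -⟩
  · exact ⟨P, hP, rfl⟩
  · exact ⟨S, hS, hSa⟩

end StrongGraph

theorem revPref_zero (m : ℕ) [NeZero m] : revPref m 0 = lastAlt m :=
  Fin.ext Fin.val_rev_zero

end PFBRPaper

theorem interior_on_main_path_general {m : ℕ} [NeZero m] {D : Set (Pref m)}
    (hD : NoRestorationDomain D) {P Q Q' : Pref m} (hP : P ∈ D) (hQ : Q ∈ D) (hQ' : Q' ∈ D)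
    (hrev : ∀ a b, Prefers Q a b → Prefers Q' b a) :
    ∃ l, VertexPathBetween D Set.univ (Q 0) (Q' 0) l ∧ P 0 ∈ l := by
  have havoid : ∀ s, (strongGraph D).Reachable (Q 0) s → ∀ x ≠ s,
      ∃ t ∈ ({Q 0, Q' 0} : Set (Fin m)), ∃ q : (strongGraph D).Walk s t, x ∉ q.support := by
    intro s hs x hxs
    obtain ⟨R, hR, rfl⟩ := exists_top_eq_of_reachable hQ hs
    by_cases hx : Prefers Q (R 0) x
    · exact ⟨Q 0, .inl rfl, hD.exists_walk_top_notMem_support hR hQ hx⟩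
    · have hx' : Prefers Q' (R 0) x := hrev x (R 0) ((not_prefers_iff_of_ne hxs.symm).mp hx)
      exact ⟨Q' 0, .inr rfl, hD.exists_walk_top_notMem_support hR hQ' hx'⟩
  obtain ⟨p, hp, hPp⟩ :=
    exists_isPath_mem_support (hD.reachable_top hQ hQ') havoid (hD.reachable_top hQ hP)
  exact ⟨p.support, vertexPathBetween_support hp, hPp⟩

/-- In a regular domain, every interior alternative belongs to some
vertex-path of `Π(a_1, a_m)`. -/
theorem interior_on_main_path (m : ℕ) [NeZero m] (hm : 3 ≤ m)
    (D : Set (Pref m)) (hD : RegularDomain D)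
    (s : Fin m) (hs0 : s ≠ 0) (hsm : s ≠ lastAlt m) :
    ∃ l, VertexPathBetween D Set.univ 0 (lastAlt m) l ∧ s ∈ l := by
  obtain ⟨hrich, ⟨hid, hrev⟩, hnr⟩ := hD
  obtain ⟨P, hP, rfl⟩ := hrich s
  rw [← revPref_zero]
  exact interior_on_main_path_general hnr hP hid hrev fun _ _ hab ↦ Fin.rev_lt_rev.mpr hab
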